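/- arXiv:2308.10563 — 3 statements merged into one kernel-verified Lean document; each statement's English description precedes it below -/
import Mathlib

section
/- If there exists z₂ > 0 with F(z₂) = ∅, then there exists a right break point: a real number z_r > 0 such that F(z) = ∅ for every z > z_r and F(z) ≠ ∅ for every z ∈ [0, z_r]. -/
open Matrix BigOperators

/-- Feasible region of the sub-problem `(D^z)`. -/
def Dfeas {m n : ℕ} (A : Matrix (Fin m) (Fin n) ℝ) (d x0 : Fin n → ℝ) (z : ℝ) :
    Set (Fin n → ℝ) :=
  {y | A.mulVec y = 0 ∧
    (∀ j, x0 j = 0 → -d j ≤ y j ∧ y j ≤ 0) ∧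
    (∀ j, 0 < x0 j → x0 j * z - d j ≤ y j ∧ y j ≤ x0 j * z + d j)}

/-!
Writing `y = z • x0 + u`, the inequalities defining `F(z)` say that `u` lies in a box independent
of `z`, and `A y = 0` says that `A u = -z • A x0`. Hence `{z | F(z) ≠ ∅}` is the preimage, under a
linear map from `ℝ`, of the image of a compact convex box: it is a closed interval. It contains a
neighbourhood of `0`, because `0 ∈ F(z)` for small `z`, and it misses some `z₂ > 0`, so it has a
positive greatest element, which is the right break point.
-/

open Filter Set Topology

theorem exists_isGreatest_of_isClosed_of_ordConnected {α : Type*}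
    [ConditionallyCompleteLinearOrder α] [TopologicalSpace α] [OrderTopology α]
    {s : Set α} (hclosed : IsClosed s) (hconn : s.OrdConnected) {a b : α} (ha : a ∈ s)
    (hb : b ∉ s) (hab : a ≤ b) : ∃ r, IsGreatest s r := by
  have hbdd : BddAbove s := by
    refine ⟨b, fun z hz => ?_⟩
    by_contra! hbz
    exact hb (hconn.out ha hz ⟨hab, hbz.le⟩)
  exact ⟨sSup s, hclosed.isGreatest_csSup ⟨a, ha⟩ hbdd⟩

section Feasibility

variable {m n : ℕ} {A : Matrix (Fin m) (Fin n) ℝ} {d x0 : Fin n → ℝ} {z : ℝ}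

/-- The box of admissible deviations `y - z • x0` for `y ∈ Dfeas A d x0 z`. Its upper bound is `0`
in the coordinates `j` with `x0 j = 0`, and `d j` in the others. -/
def deviationBox (d x0 : Fin n → ℝ) : Set (Fin n → ℝ) :=
  Icc (-d) ((Function.support x0).indicator d)

theorem mem_Dfeas_iff_sub_mem_deviationBox (hx0 : ∀ j, 0 ≤ x0 j) {y : Fin n → ℝ} :
    y ∈ Dfeas A d x0 z ↔ A *ᵥ y = 0 ∧ y - z • x0 ∈ deviationBox d x0 := by
  refine and_congr_right fun _ => ?_
  simp only [deviationBox, mem_Icc, Pi.le_def, ← forall_and]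
  refine forall_congr' fun j => ?_
  rcases (hx0 j).eq_or_lt with hj | hj
  · simp [← hj]
  · simp [hj, hj.ne', mul_comm z, neg_le_sub_iff_le_add, add_comm]

theorem nonempty_Dfeas_iff_smul_mem_image (hx0 : ∀ j, 0 ≤ x0 j) :
    (Dfeas A d x0 z).Nonempty ↔ z • -(A *ᵥ x0) ∈ A.mulVecLin '' deviationBox d x0 := by
  constructor
  · rintro ⟨y, hy⟩
    obtain ⟨hAy, hbox⟩ := (mem_Dfeas_iff_sub_mem_deviationBox hx0).1 hy
    exact ⟨_, hbox, by simp [mulVec_sub, mulVec_smul, hAy]⟩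
  · rintro ⟨u, hu, hAu⟩
    refine ⟨u + z • x0, (mem_Dfeas_iff_sub_mem_deviationBox hx0).2 ⟨?_, by simpa using hu⟩⟩
    rw [mulVecLin_apply] at hAu
    simp [mulVec_add, mulVec_smul, hAu]

theorem isClosed_setOf_nonempty_Dfeas (hx0 : ∀ j, 0 ≤ x0 j) :
    IsClosed {z | (Dfeas A d x0 z).Nonempty} := by
  have hcompact : IsCompact (A.mulVecLin '' deviationBox d x0) :=
    isCompact_Icc.image A.mulVecLin.continuous_of_finiteDimensional
  simp only [nonempty_Dfeas_iff_smul_mem_image hx0]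
  exact hcompact.isClosed.preimage (by fun_prop)

theorem ordConnected_setOf_nonempty_Dfeas (hx0 : ∀ j, 0 ≤ x0 j) :
    {z | (Dfeas A d x0 z).Nonempty}.OrdConnected := by
  have hconvex : Convex ℝ (A.mulVecLin '' deviationBox d x0) :=
    (convex_Icc _ _).linear_image A.mulVecLin
  simp only [nonempty_Dfeas_iff_smul_mem_image hx0]
  exact (hconvex.linear_preimage (LinearMap.toSpanSingleton ℝ _ (-(A *ᵥ x0)))).ordConnected

theorem eventually_zero_mem_Dfeas (hd : ∀ j, 0 < d j) :
    ∀ᶠ z in 𝓝 0, 0 ∈ Dfeas A d x0 z := by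
  have hsmall : ∀ᶠ z in 𝓝 (0 : ℝ), ∀ j, |x0 j * z| < d j :=
    eventually_all.2 fun j =>
      (by fun_prop : Continuous fun z => |x0 j * z|).continuousAt.eventually_lt_const
        (by simpa using hd j)
  filter_upwards [hsmall] with z hz
  refine ⟨mulVec_zero A, fun j _ => ⟨by simpa using (hd j).le, le_rfl⟩, fun j _ => ?_⟩
  obtain ⟨hlower, hupper⟩ := abs_lt.1 (hz j)
  constructor <;> simp only [Pi.zero_apply] <;> linarith

end Feasibility

/-- if `F(z₂) = ∅` for some `z₂ > 0`, then the right break point exists. -/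
theorem exists_right_break_point {m n : ℕ} (A : Matrix (Fin m) (Fin n) ℝ)
    (c d x0 : Fin n → ℝ) (hd : ∀ j, 0 < d j) (hx0 : ∀ j, 0 ≤ x0 j)
    (h : ∃ z₂ : ℝ, 0 < z₂ ∧ Dfeas A d x0 z₂ = ∅) :
    ∃ zr : ℝ, 0 < zr ∧ (∀ z : ℝ, zr < z → Dfeas A d x0 z = ∅) ∧
      (∀ z ∈ Set.Icc 0 zr, (Dfeas A d x0 z).Nonempty) := by
  obtain ⟨z₂, hz₂, hempty⟩ := h
  have hconn := ordConnected_setOf_nonempty_Dfeas (A := A) (d := d) hx0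
  have hnear : ∀ᶠ z in 𝓝 0, (Dfeas A d x0 z).Nonempty :=
    (eventually_zero_mem_Dfeas hd).mono fun _ hz => ⟨0, hz⟩
  have hzero : (Dfeas A d x0 0).Nonempty := hnear.self_of_nhds
  obtain ⟨zr, hzr, hmax⟩ := exists_isGreatest_of_isClosed_of_ordConnected
    (isClosed_setOf_nonempty_Dfeas hx0) hconn hzero (not_nonempty_iff_eq_empty.2 hempty) hz₂.le
  obtain ⟨ε, hεpos, hε⟩ := hnear.exists_gt
  refine ⟨zr, hεpos.trans_le (hmax hε), fun z hz => ?_, fun z hz => hconn.out hzero hzr hz⟩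
  exact not_nonempty_iff_eq_empty.1 fun hne => hz.not_ge (hmax hne)
end

section
/- Suppose A is totally unimodular, x⁰ and d are integer vectors, and J̄ ≠ ∅. If z_l < 0 is the left break point of ψ, i.e. F(z) = ∅ for every z < z_l and F(z) ≠ ∅ for every z ∈ [z_l, 0], then there exist integers ς and σ with σ ≠ 0 such that z_l = ς/σ, |σ| ≤ 2·|J̄|·x⁰_max, and |ς| ≤ (n + |J̄|)·d_max. -/
open Matrix BigOperators

/-- Every square submatrix has determinant `0`, `1` or `-1`. -/
def TotUnimodular {m n : ℕ} (A : Matrix (Fin m) (Fin n) ℝ) : Prop :=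
  ∀ (k : ℕ) (f : Fin k → Fin m) (g : Fin k → Fin n),
    (A.submatrix f g).det = 0 ∨ (A.submatrix f g).det = 1 ∨ (A.submatrix f g).det = -1

/-!
A point `z` fails to be feasible exactly when some vector `v` of the row space of `A` separates the
origin from the box, i.e. `v ⬝ᵥ y > 0` for all `y` in the box. Every such `v` dominates, orthant by
orthant, an elementary vector (a nonzero row-space vector of minimal support) with the same
property, and by Cramer's rule the elementary vectors of a totally unimodular matrix are multiples
of vectors with entries in `{-1, 0, 1}`. Hence the feasible parameters are cut out by finitely many
inequalities `z * σ ≤ ς` whose coefficients are signed sums of the entries of `x⁰` and of the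
bounds, and at a break point one of these inequalities with `σ ≠ 0` is tight.
-/

open Function

section ElementaryVectors

/-- An elementary vector of a subspace, in the sense of Rockafellar: a nonzero vector of minimal
support. -/
structure IsElementary {ι R : Type*} [Semiring R] (V : Submodule R (ι → R)) (v : ι → R) :
    Prop where
  mem : v ∈ V
  ne_zero : v ≠ 0
  eq_zero_of_support_ssubset : ∀ ⦃w⦄, w ∈ V → support w ⊂ support v → w = 0

/-- `v` conforms to `w` if every nonzero entry of `v` has the same sign as the corresponding entry
of `w`; the common sign is encoded by the positivity of the product. -/
def ConformsTo {ι R : Type*} [Semiring R] [LT R] (v w : ι → R) : Prop :=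
  ∀ j, v j ≠ 0 → 0 < v j * w j

variable {ι R : Type*} [Field R] [LinearOrder R]

lemma ConformsTo.support_subset {v w : ι → R} (h : ConformsTo v w) : support v ⊆ support w :=
  fun j hj => right_ne_zero_of_mul (h j hj).ne'

variable [IsStrictOrderedRing R]

lemma ConformsTo.refl (v : ι → R) : ConformsTo v v :=
  fun _ hj => mul_self_pos.2 hj

lemma ConformsTo.trans {u v w : ι → R} (huv : ConformsTo u v) (hvw : ConformsTo v w) :
    ConformsTo u w := by
  intro j hj
  have hv : v j ≠ 0 := huv.support_subset hj
  have h : 0 < (u j * w j) * (v j * v j) := by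
    calc 0 < (u j * v j) * (v j * w j) := mul_pos (huv j hj) (hvw j hv)
      _ = (u j * w j) * (v j * v j) := by ring
  exact pos_of_mul_pos_left h (mul_self_nonneg _)

variable [Finite ι]

lemma exists_sub_smul_conformsTo {v w : ι → R} (hsupp : support w ⊆ support v)
    (hpos : ∃ j, 0 < w j * v j) :
    ∃ t : R, 0 < t ∧ ConformsTo (v - t • w) v ∧ support (v - t • w) ⊂ support v := by
  obtain ⟨i, hi, hmin⟩ := Set.exists_min_image {j | 0 < w j * v j} (fun j => v j / w j)
    (Set.toFinite _) hpos
  simp only [Set.mem_ofPred_eq] at hi hmin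
  have hwi : w i ≠ 0 := left_ne_zero_of_mul hi.ne'
  have hvi : v i ≠ 0 := right_ne_zero_of_mul hi.ne'
  have ht : 0 < v i / w i := div_pos_iff.2 (mul_pos_iff.1 (by rwa [mul_comm]))
  have hle (j : ι) : v i / w i * (w j * v j) ≤ v j * v j := by
    rcases le_or_gt (w j * v j) 0 with hj | hj
    · exact (mul_nonpos_of_nonneg_of_nonpos ht.le hj).trans (mul_self_nonneg _)
    · have hwj : w j ≠ 0 := left_ne_zero_of_mul hj.ne'
      calc v i / w i * (w j * v j) ≤ v j / w j * (w j * v j) :=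
            mul_le_mul_of_nonneg_right (hmin j hj) hj.le
        _ = v j * v j := by field_simp
  have hconf : ConformsTo (v - (v i / w i) • w) v := by
    intro j hj
    have hvj : v j ≠ 0 := by
      intro hvj
      have hwj : w j = 0 := notMem_support.1 fun h => hsupp h hvj
      simp [hvj, hwj] at hj
    have hnonneg : 0 ≤ (v - (v i / w i) • w) j * v j := by
      simp only [Pi.sub_apply, Pi.smul_apply, smul_eq_mul]
      linarith [hle j]
    exact hnonneg.lt_of_ne (mul_ne_zero hj hvj).symm
  exact ⟨v i / w i, ht, hconf, hconf.support_subset, fun h => h hvi (by simp [hwi])⟩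

variable {V : Submodule R (ι → R)} {v : ι → R}

lemma exists_isElementary_conformsTo (hv : v ∈ V) (hv0 : v ≠ 0) :
    ∃ e, IsElementary V e ∧ ConformsTo e v := by
  induction hs : support v using WellFoundedLT.induction generalizing v with
  | ind s ih =>
  subst hs
  by_cases hmin : ∀ ⦃w⦄, w ∈ V → support w ⊂ support v → w = 0
  · exact ⟨v, ⟨hv, hv0, hmin⟩, .refl v⟩
  push Not at hmin
  obtain ⟨w, hw, hwv, hw0⟩ := hmin
  wlog hpos : ∃ j, 0 < w j * v j generalizing w
  · obtain ⟨j, hj⟩ := Function.ne_iff.1 hw0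
    have hneg : w j * v j < 0 :=
      (not_lt.1 (not_exists.1 hpos j)).lt_of_ne (mul_ne_zero hj (hwv.subset hj))
    exact this (-w) (neg_mem hw) (by rwa [support_neg]) (neg_ne_zero.2 hw0)
      ⟨j, by simpa using hneg⟩
  obtain ⟨t, -, hconf, hlt⟩ := exists_sub_smul_conformsTo hwv.subset hpos
  obtain ⟨i, hvi, hwi⟩ := Set.exists_of_ssubset hwv
  have hne : v - t • w ≠ 0 :=
    Function.ne_iff.2 ⟨i, by simpa [notMem_support.1 hwi] using hvi⟩
  obtain ⟨e, he, hev⟩ := ih _ hlt (sub_mem hv (V.smul_mem t hw)) hne rfl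
  exact ⟨e, he, hev.trans hconf⟩

lemma exists_isElementary_conformsTo_pos (f : Module.Dual R (ι → R)) (hv : v ∈ V)
    (hfv : 0 < f v) : ∃ e, IsElementary V e ∧ ConformsTo e v ∧ 0 < f e := by
  induction hs : support v using WellFoundedLT.induction generalizing v with
  | ind s ih =>
  subst hs
  have hv0 : v ≠ 0 := by rintro rfl; simp at hfv
  obtain ⟨e, he, hev⟩ := exists_isElementary_conformsTo hv hv0
  rcases lt_or_ge 0 (f e) with hfe | hfe
  · exact ⟨e, he, hev, hfe⟩
  obtain ⟨j, hj⟩ := Function.ne_iff.1 he.ne_zero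
  obtain ⟨t, ht, hconf, hlt⟩ := exists_sub_smul_conformsTo hev.support_subset ⟨j, hev j hj⟩
  have hf : 0 < f (v - t • e) := by
    rw [map_sub, map_smul, smul_eq_mul]
    linarith [mul_nonpos_of_nonneg_of_nonpos ht.le hfe]
  obtain ⟨e', he', hconf', hpos⟩ := ih _ hlt (sub_mem hv (V.smul_mem t he.mem)) hf rfl
  exact ⟨e', he', hconf'.trans hconf, hpos⟩

end ElementaryVectors

section TotallyUnimodular

variable {m ι κ K : Type*} [Field K]

lemma exists_det_submatrix_ne_zero [Finite m] [Fintype κ] [DecidableEq κ] {A : Matrix m κ K}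
    (hA : LinearIndependent K A.col) : ∃ f : κ → m, (A.submatrix f id).det ≠ 0 := by
  have hspan : Submodule.span K (Set.range A.row) = ⊤ := by
    have := Fintype.ofFinite m
    apply Submodule.eq_top_of_finrank_eq
    rw [← rank_eq_finrank_span_row, ← rank_transpose, LinearIndependent.rank_matrix (M := Aᵀ) hA,
      Module.finrank_fintype_fun_eq_card]
  obtain ⟨τ, a, -, hτspan, hτ⟩ := exists_linearIndependent' K A.row
  let b := Module.Basis.mk hτ (hτspan.trans hspan).ge
  let σ := (Pi.basisFun K κ).indexEquiv b
  refine ⟨a ∘ σ, ?_⟩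
  have hrow : LinearIndependent K (A.submatrix (a ∘ σ) id).row := hτ.comp σ σ.injective
  exact ((isUnit_iff_isUnit_det _).1 (linearIndependent_rows_iff_isUnit.1 hrow)).ne_zero

lemma mem_range_signTypeCast_of_sum_smul_col_eq [Finite m] [Fintype κ] {A : Matrix m ι K}
    (hA : A.IsTotallyUnimodular) {g : κ → ι} (hg : LinearIndependent K fun k => A.col (g k))
    {j : ι} {a : κ → K} (ha : ∑ k, a k • A.col (g k) = A.col j) (k : κ) :
    a k ∈ Set.range (SignType.cast : SignType → K) := by
  classical
  rw [isTotallyUnimodular_iff_fintype] at hA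
  obtain ⟨f, hf⟩ := exists_det_submatrix_ne_zero (A := A.submatrix id g) hg
  simp only [submatrix_submatrix, CompTriple.comp_eq] at hf
  have hcol : A.submatrix f (update g k j) =
      (A.submatrix f g).updateCol k fun i => ∑ k', a k' • A.submatrix f g i k' := by
    ext i k'
    rcases eq_or_ne k' k with rfl | hk
    · simpa using (congrFun ha (f i)).symm
    · simp [hk]
  have hdet : (A.submatrix f (update g k j)).det = a k * (A.submatrix f g).det := by
    rw [hcol, det_updateCol_sum, smul_eq_mul]
  obtain ⟨s, hs⟩ := hA κ f g
  obtain ⟨t, ht⟩ := hA κ f (update g k j)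
  rw [← hs] at hf
  have hss : (s : K) * s = 1 := by
    rcases s with _ | _ | _ <;> simp at hf ⊢
  refine ⟨t * s, ?_⟩
  rw [SignType.coe_mul, ht, hdet, ← hs, mul_assoc, hss, mul_one]

lemma dual_comp_col_mem_range_vecMulLinear {R : Type*} [CommSemiring R] [Fintype m]
    (A : Matrix m ι R) (φ : Module.Dual R (m → R)) :
    (fun j => φ (A.col j)) ∈ LinearMap.range A.vecMulLinear := by
  classical
  refine ⟨(dotProductEquiv R m).symm φ, funext fun j => ?_⟩
  exact LinearMap.congr_fun ((dotProductEquiv R m).apply_symm_apply φ) (A.col j)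

namespace IsElementary

variable [Fintype m] {A : Matrix m ι K} {e : ι → K} {i : ι}

lemma col_mem_span (he : IsElementary (LinearMap.range A.vecMulLinear) e) (hi : e i ≠ 0) (j : ι) :
    A.col j ∈ Submodule.span K (Set.range fun k : {k | e k = 0 ∨ k = i} => A.col k) := by
  by_contra hj
  obtain ⟨φ, hφj, hφ⟩ := Submodule.exists_le_ker_of_notMem hj
  have hφ0 (k : ι) (hk : e k = 0 ∨ k = i) : φ (A.col k) = 0 :=
    hφ (Submodule.subset_span ⟨⟨k, hk⟩, rfl⟩)
  have hsupp : support (fun k => φ (A.col k)) ⊂ support e :=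
    ⟨fun k hk hek => hk (hφ0 k (.inl hek)), fun h => h hi (hφ0 i (.inr rfl))⟩
  exact hφj (congrFun (he.eq_zero_of_support_ssubset
    (dual_comp_col_mem_range_vecMulLinear A φ) hsupp) j)

lemma exists_eq_sign_mul [Finite ι] (hA : A.IsTotallyUnimodular)
    (he : IsElementary (LinearMap.range A.vecMulLinear) e) (hi : e i ≠ 0) (j : ι) :
    ∃ s : SignType, e j = s * e i := by
  obtain ⟨κ, g, hginj, hspan, hli⟩ :=
    exists_linearIndependent' K (fun k : {k | e k = 0 ∨ k = i} => A.col k)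
  have := Finite.of_injective g hginj
  have := Fintype.ofFinite κ
  have hj := he.col_mem_span hi j
  rw [← hspan, Submodule.mem_span_range_iff_exists_fun] at hj
  obtain ⟨a, ha⟩ := hj
  have hej : e j = ∑ k, a k * e (g k) := by
    obtain ⟨w, rfl⟩ := he.mem
    calc w ⬝ᵥ A.col j = w ⬝ᵥ ∑ k, a k • A.col (g k) := congrArg (w ⬝ᵥ ·) ha.symm
      _ = ∑ k, a k * (w ⬝ᵥ A.col (g k)) := by
        simp only [dotProduct_sum, dotProduct_smul, smul_eq_mul]
  have hzero (k : κ) (hk : (g k : ι) ≠ i) : a k * e (g k) = 0 := by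
    rw [(g k).2.resolve_right hk, mul_zero]
  by_cases h : ∃ k, (g k : ι) = i
  · obtain ⟨k, hk⟩ := h
    obtain ⟨s, hs⟩ := mem_range_signTypeCast_of_sum_smul_col_eq hA hli ha k
    refine ⟨s, ?_⟩
    rw [hej, Fintype.sum_eq_single k, hk, hs]
    exact fun k' hk' => hzero k' fun h => hk' (hginj (Subtype.ext (h.trans hk.symm)))
  · refine ⟨0, ?_⟩
    rw [hej, Finset.sum_eq_zero fun k _ => hzero k (not_exists.1 h k), SignType.coe_zero, zero_mul]

lemma exists_eq_smul_sign [LinearOrder K] [IsStrictOrderedRing K] [Finite ι]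
    (hA : A.IsTotallyUnimodular) (he : IsElementary (LinearMap.range A.vecMulLinear) e) :
    ∃ c : K, 0 < c ∧ ∃ s : ι → SignType, e = c • fun j => (s j : K) := by
  obtain ⟨i, hi⟩ := Function.ne_iff.1 he.ne_zero
  choose s hs using he.exists_eq_sign_mul hA hi
  refine ⟨|e i|, abs_pos.2 hi, fun j => s j * SignType.sign (e i), funext fun j => ?_⟩
  rw [hs j, Pi.smul_apply, smul_eq_mul, SignType.coe_mul, mul_left_comm, abs_mul_sign]

end IsElementary

end TotallyUnimodular

section BoxMin

variable {ι R : Type*} [Fintype ι] [CommRing R] [LinearOrder R]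

/-- The least value of `v ⬝ᵥ y` for `y` in the box `Set.Icc l u`, when this box is nonempty. -/
def boxMin (l u v : ι → R) : R :=
  ∑ j, min (v j * l j) (v j * u j)

variable [IsStrictOrderedRing R]

lemma boxMin_le_dotProduct {l u y : ι → R} (hy : y ∈ Set.Icc l u) (v : ι → R) :
    boxMin l u v ≤ v ⬝ᵥ y := by
  refine Finset.sum_le_sum fun j _ => ?_
  rcases le_total 0 (v j) with hv | hv
  · exact (min_le_left _ _).trans (mul_le_mul_of_nonneg_left (hy.1 j) hv)
  · exact (min_le_right _ _).trans (mul_le_mul_of_nonpos_left (hy.2 j) hv)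

lemma boxMin_smul {c : R} (hc : 0 ≤ c) (l u v : ι → R) :
    boxMin l u (c • v) = c * boxMin l u v := by
  simp only [boxMin, Finset.mul_sum, mul_min_of_nonneg _ _ hc, Pi.smul_apply, smul_eq_mul,
    mul_assoc]

lemma boxMin_add (p l u v : ι → R) :
    boxMin (p + l) (p + u) v = v ⬝ᵥ p + boxMin l u v := by
  simp only [boxMin, dotProduct, Pi.add_apply, mul_add, min_add_add_left, Finset.sum_add_distrib]

end BoxMin

section Farkas

variable {m ι : Type*} [Fintype m] [Fintype ι] {A : Matrix m ι ℝ}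

lemma exists_mem_range_vecMulLinear_forall_dotProduct_pos {C : Set (ι → ℝ)} (hC : IsCompact C)
    (hC' : Convex ℝ C) (h : ∀ y ∈ C, A *ᵥ y ≠ 0) :
    ∃ v ∈ LinearMap.range A.vecMulLinear, ∀ y ∈ C, 0 < v ⬝ᵥ y := by
  have himage : IsCompact (A.mulVecLin '' C) :=
    hC.image A.mulVecLin.continuous_of_finiteDimensional
  have h0 : (0 : m → ℝ) ∉ A.mulVecLin '' C := fun ⟨y, hy, hy0⟩ => h y hy hy0
  obtain ⟨φ, a, ha, hφ⟩ :=
    geometric_hahn_banach_point_closed (hC'.linear_image A.mulVecLin) himage.isClosed h0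
  refine ⟨_, dual_comp_col_mem_range_vecMulLinear A φ.toLinearMap, fun y hy => ?_⟩
  calc 0 = φ 0 := (map_zero φ).symm
    _ < φ (A *ᵥ y) := ha.trans (hφ _ ⟨y, hy, rfl⟩)
    _ = (fun j => φ (A.col j)) ⬝ᵥ y := by
      rw [mulVec_eq_sum, map_sum]
      simp [dotProduct, mul_comm, col_def]

lemma exists_isElementary_boxMin_pos {l u : ι → ℝ} (hlu : l ≤ u)
    (h : ∀ y ∈ Set.Icc l u, A *ᵥ y ≠ 0) :
    ∃ e, IsElementary (LinearMap.range A.vecMulLinear) e ∧ 0 < boxMin l u e := by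
  obtain ⟨v, hv, hpos⟩ :=
    exists_mem_range_vecMulLinear_forall_dotProduct_pos isCompact_Icc (convex_Icc l u) h
  -- On the orthant of `v`, the minimum over the box is attained at the vertex `y`, hence is linear.
  let y : ι → ℝ := fun j => if 0 ≤ v j then l j else u j
  have hy : y ∈ Set.Icc l u :=
    ⟨fun j => by dsimp only [y]; split_ifs <;> simp [hlu j],
      fun j => by dsimp only [y]; split_ifs <;> simp [hlu j]⟩
  obtain ⟨e, he, hev, hey⟩ := exists_isElementary_conformsTo_pos
    ((dotProductBilin ℝ ℝ).flip y) hv (hpos y hy)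
  refine ⟨e, he, hey.trans_eq (Finset.sum_congr rfl fun j _ => ?_)⟩
  rcases eq_or_ne (e j) 0 with hej | hej
  · simp [hej]
  by_cases hvj : 0 ≤ v j
  · have : 0 ≤ e j := (pos_of_mul_pos_left (hev j hej) hvj).le
    simp [y, hvj, mul_le_mul_of_nonneg_left (hlu j) this]
  · have : e j ≤ 0 := (neg_of_mul_pos_left (hev j hej) (not_le.1 hvj).le).le
    simp [y, hvj, mul_le_mul_of_nonpos_left (hlu j) this]

theorem exists_mem_Icc_mulVec_eq_zero_iff (hA : A.IsTotallyUnimodular) {l u : ι → ℝ}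
    (hlu : l ≤ u) :
    (∃ y ∈ Set.Icc l u, A *ᵥ y = 0) ↔
      ∀ s : ι → SignType, (fun j => (s j : ℝ)) ∈ LinearMap.range A.vecMulLinear →
        boxMin l u (fun j => (s j : ℝ)) ≤ 0 := by
  constructor
  · rintro ⟨y, hy, hAy⟩ s ⟨w, hw⟩
    calc boxMin l u (fun j => (s j : ℝ)) ≤ (fun j => (s j : ℝ)) ⬝ᵥ y := boxMin_le_dotProduct hy _
      _ = w ⬝ᵥ A *ᵥ y := by rw [← hw, vecMulLinear_apply, dotProduct_mulVec]
      _ = 0 := by rw [hAy, dotProduct_zero]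
  · contrapose!
    intro h
    obtain ⟨e, he, hpos⟩ := exists_isElementary_boxMin_pos hlu h
    obtain ⟨c, hc, s, rfl⟩ := he.exists_eq_smul_sign hA
    rw [boxMin_smul hc.le] at hpos
    exact ⟨s, (Submodule.smul_mem_iff _ hc.ne').1 he.mem, pos_of_mul_pos_right hpos hc.le⟩

end Farkas

section BreakPoints

lemma mem_frontier_of_isLeast {α : Type*} [TopologicalSpace α] [LinearOrder α] [OrderTopology α]
    [DenselyOrdered α] [NoMinOrder α] {s : Set α} {a : α} (h : IsLeast s a) : a ∈ frontier s := by
  rw [mem_frontier_iff_notMem_interior h.1]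
  intro ha
  have : a ∈ interior (Set.Ici a) := interior_mono h.2 ha
  simp at this

lemma exists_eq_zero_of_mem_frontier_setOf_forall_le {κ : Type*} [Finite κ] {a b : κ → ℝ} {z : ℝ}
    (hz : z ∈ frontier {z | ∀ k, z * a k + b k ≤ 0}) : ∃ k, a k ≠ 0 ∧ z * a k + b k = 0 := by
  have hclosed : IsClosed {z : ℝ | ∀ k, z * a k + b k ≤ 0} := by
    simp only [Set.ofPred_forall]
    exact isClosed_iInter fun k => isClosed_le (by fun_prop) continuous_const
  rw [hclosed.frontier_eq] at hz
  obtain ⟨hle, hint⟩ := hz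
  by_contra! h
  refine hint (mem_interior_iff_mem_nhds.2 (Filter.eventually_all.2 fun k => ?_))
  rcases eq_or_ne (a k) 0 with hk | hk
  · filter_upwards with z'
    simpa [hk] using hle k
  · have hcont : Continuous fun z : ℝ => z * a k + b k := by fun_prop
    exact (hcont.continuousAt.eventually_lt continuousAt_const
      ((hle k).lt_of_ne (h k hk))).mono fun _ => le_of_lt

/-- The parameters `z` for which the kernel of `A` meets the box `Set.Icc l u` translated by
`z • x`; the boundary points of this set are the break points of the parametric problem. -/
def feasibleParams {m ι : Type*} [Fintype ι] (A : Matrix m ι ℝ) (x l u : ι → ℝ) : Set ℝ :=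
  {z | ∃ y ∈ Set.Icc (z • x + l) (z • x + u), A *ᵥ y = 0}

variable {m ι : Type*} [Fintype ι] {A : Matrix m ι ℝ} {x l u : ι → ℝ} {z : ℝ}

lemma mem_feasibleParams_iff [Fintype m] (hA : A.IsTotallyUnimodular) (hlu : l ≤ u) :
    z ∈ feasibleParams A x l u ↔
      ∀ s : {s : ι → SignType // (fun j => (s j : ℝ)) ∈ LinearMap.range A.vecMulLinear},
        z * ((fun j => (s.1 j : ℝ)) ⬝ᵥ x) + boxMin l u (fun j => (s.1 j : ℝ)) ≤ 0 := by
  have h := exists_mem_Icc_mulVec_eq_zero_iff hA (add_le_add_right hlu (z • x))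
  simp only [boxMin_add, dotProduct_smul, smul_eq_mul] at h
  exact h.trans ⟨fun h s => h s.1 s.2, fun h s hs => h ⟨s, hs⟩⟩

lemma exists_sign_of_mem_frontier_feasibleParams [Finite m] (hA : A.IsTotallyUnimodular)
    (hz : z ∈ frontier (feasibleParams A x l u)) :
    ∃ s : ι → SignType, (fun j => (s j : ℝ)) ⬝ᵥ x ≠ 0 ∧
      z * ((fun j => (s j : ℝ)) ⬝ᵥ x) + boxMin l u (fun j => (s j : ℝ)) = 0 := by
  have hlu : l ≤ u := by
    obtain ⟨z', y, hy, -⟩ : (feasibleParams A x l u).Nonempty :=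
      closure_nonempty_iff.1 ⟨z, frontier_subset_closure hz⟩
    exact le_of_add_le_add_left (hy.1.trans hy.2)
  have := Fintype.ofFinite m
  rw [Set.ext fun z => mem_feasibleParams_iff hA hlu] at hz
  obtain ⟨s, hs⟩ := exists_eq_zero_of_mem_frontier_setOf_forall_le hz
  exact ⟨s, hs⟩

lemma abs_sign_mul_le (s : SignType) (a : ℝ) : |(s : ℝ) * a| ≤ |a| := by
  rcases s with _ | _ | _ <;> simp

lemma abs_sign_dotProduct_le (s : ι → SignType) (x : ι → ℝ) :
    |(fun j => (s j : ℝ)) ⬝ᵥ x| ≤ ∑ j, |x j| :=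
  (Finset.abs_sum_le_sum_abs _ _).trans (Finset.sum_le_sum fun j _ => abs_sign_mul_le (s j) (x j))

lemma abs_boxMin_sign_le (s : ι → SignType) (l u : ι → ℝ) :
    |boxMin l u fun j => (s j : ℝ)| ≤ ∑ j, max |l j| |u j| :=
  (Finset.abs_sum_le_sum_abs _ _).trans <| Finset.sum_le_sum fun _ _ =>
    abs_min_le_max_abs_abs.trans (max_le_max (abs_sign_mul_le _ _) (abs_sign_mul_le _ _))

theorem exists_int_div_eq_of_mem_frontier_feasibleParams [Finite m] (hA : A.IsTotallyUnimodular)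
    (hx : ∀ j, ∃ a : ℤ, x j = a) (hl : ∀ j, ∃ a : ℤ, l j = a) (hu : ∀ j, ∃ a : ℤ, u j = a)
    (hz : z ∈ frontier (feasibleParams A x l u)) :
    ∃ ς σ : ℤ, σ ≠ 0 ∧ z = (ς : ℝ) / (σ : ℝ) ∧
      |(σ : ℝ)| ≤ ∑ j, |x j| ∧ |(ς : ℝ)| ≤ ∑ j, max |l j| |u j| := by
  obtain ⟨s, hσ, hz⟩ := exists_sign_of_mem_frontier_feasibleParams hA hz
  choose x' hx' using hx
  choose l' hl' using hl
  choose u' hu' using hu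
  have hσ_int : ((∑ j, (s j : ℤ) * x' j : ℤ) : ℝ) = (fun j => (s j : ℝ)) ⬝ᵥ x := by
    simp [dotProduct, hx']
  have hς_int : ((-boxMin l' u' fun j => (s j : ℤ) : ℤ) : ℝ) = -boxMin l u fun j => (s j : ℝ) := by
    simp [boxMin, hl', hu']
  refine ⟨-boxMin l' u' fun j => (s j : ℤ), ∑ j, (s j : ℤ) * x' j, ?_, ?_, ?_, ?_⟩
  · rwa [← hσ_int, Int.cast_ne_zero] at hσ
  · rw [hσ_int, hς_int, eq_div_iff hσ]
    exact eq_neg_of_add_eq_zero_left hz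
  · rw [hσ_int]
    exact abs_sign_dotProduct_le s x
  · rw [hς_int, abs_neg]
    exact abs_boxMin_sign_le s l u

end BreakPoints

section SubProblem

lemma TotUnimodular.isTotallyUnimodular {m n : ℕ} {A : Matrix (Fin m) (Fin n) ℝ}
    (hA : TotUnimodular A) : A.IsTotallyUnimodular := by
  intro k f g _ _
  rcases hA k f g with h | h | h <;> rw [h]
  exacts [⟨0, SignType.coe_zero⟩, ⟨1, SignType.coe_one⟩, ⟨-1, SignType.coe_neg_one⟩]

lemma sum_le_card_mul_of_support_subset {ι : Type*} [Fintype ι] {f : ι → ℝ} {S : Finset ι} {M : ℝ}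
    (hS : support f ⊆ S) (hM : ∀ j ∈ S, f j ≤ M) : ∑ j, f j ≤ S.card * M := by
  rw [← nsmul_eq_mul, ← Finset.sum_subset S.subset_univ fun j _ hj => ?_]
  · exact S.sum_le_card_nsmul f M hM
  · exact notMem_support.1 fun h => hj (hS h)

variable {m n : ℕ} {A : Matrix (Fin m) (Fin n) ℝ} {d x0 : Fin n → ℝ} {z : ℝ}

lemma setOf_dfeas_nonempty_eq_feasibleParams (hx0 : ∀ j, 0 ≤ x0 j) :
    {z | (Dfeas A d x0 z).Nonempty} = feasibleParams A x0 (-d) ((support x0).indicator d) := by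
  ext z
  refine exists_congr fun y => and_comm.trans (and_congr_left fun _ => ?_)
  rw [Set.mem_Icc, Pi.le_def, Pi.le_def, ← forall_and, ← forall_and]
  refine forall_congr' fun j => ?_
  rcases (hx0 j).eq_or_lt with hj | hj
  · simp [← hj]
  · simp [hj, hj.ne', mul_comm z, sub_eq_add_neg]

theorem left_break_point_form_general (hA : A.IsTotallyUnimodular) (hx0 : ∀ j, 0 ≤ x0 j)
    (hx0int : ∀ j, ∃ a : ℤ, x0 j = a) (hdint : ∀ j, ∃ a : ℤ, d j = a)
    (hz : z ∈ frontier {z | (Dfeas A d x0 z).Nonempty}) :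
    ∃ ς σ : ℤ, σ ≠ 0 ∧ z = (ς : ℝ) / (σ : ℝ) ∧
      |(σ : ℝ)| ≤ ∑ j, x0 j ∧ |(ς : ℝ)| ≤ ∑ j, |d j| := by
  rw [setOf_dfeas_nonempty_eq_feasibleParams hx0] at hz
  have hneg_int (j : Fin n) : ∃ a : ℤ, (-d) j = a :=
    (hdint j).imp' (- ·) fun a ha => by simp [ha]
  have hind_int (j : Fin n) : ∃ a : ℤ, (support x0).indicator d j = a := by
    by_cases hj : j ∈ support x0
    · simpa [hj] using hdint j
    · exact ⟨0, by simp [hj]⟩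
  have hbound (j : Fin n) : max |(-d) j| |(support x0).indicator d j| ≤ |d j| :=
    max_le (abs_neg _).le (norm_indicator_le_norm_self d j)
  obtain ⟨ς, σ, hσ, hzσ, hσle, hςle⟩ :=
    exists_int_div_eq_of_mem_frontier_feasibleParams hA hx0int hneg_int hind_int hz
  simp only [abs_of_nonneg (hx0 _)] at hσle
  exact ⟨ς, σ, hσ, hzσ, hσle, hςle.trans (Finset.sum_le_sum fun j _ => hbound j)⟩

end SubProblem

/-- under total unimodularity and integrality, the left break point `z_l`
is a fraction `ς/σ` with `|σ| ≤ 2|J̄|x⁰_max` and `|ς| ≤ (n + |J̄|)d_max`. -/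
theorem left_break_point_form {m n : ℕ} (A : Matrix (Fin m) (Fin n) ℝ)
    (c d x0 : Fin n → ℝ) (hd : ∀ j, 0 < d j) (hx0 : ∀ j, 0 ≤ x0 j)
    (hTU : TotUnimodular A)
    (hx0int : ∀ j, ∃ a : ℤ, x0 j = a) (hdint : ∀ j, ∃ a : ℤ, d j = a)
    (Jbar : Finset (Fin n)) (hJbar : ∀ j, j ∈ Jbar ↔ 0 < x0 j) (hJne : Jbar.Nonempty)
    (xmax dmax : ℝ)
    (hxmax : IsGreatest (x0 '' {j | 0 < x0 j}) xmax)
    (hdmax : IsGreatest (Set.range d) dmax)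
    (zl : ℝ) (hzl : zl < 0)
    (hleft : ∀ z : ℝ, z < zl → Dfeas A d x0 z = ∅)
    (hright : ∀ z ∈ Set.Icc zl 0, (Dfeas A d x0 z).Nonempty) :
    ∃ ς σ : ℤ, σ ≠ 0 ∧ zl = (ς : ℝ) / (σ : ℝ) ∧
      |(σ : ℝ)| ≤ 2 * (Jbar.card : ℝ) * xmax ∧
      |(ς : ℝ)| ≤ ((n : ℝ) + (Jbar.card : ℝ)) * dmax := by
  have hleast : IsLeast {z | (Dfeas A d x0 z).Nonempty} zl :=
    ⟨hright zl ⟨le_rfl, hzl.le⟩, fun z hz => not_lt.1 fun hlt => hz.ne_empty (hleft z hlt)⟩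
  obtain ⟨ς, σ, hσ, hz, hσle, hςle⟩ := left_break_point_form_general hTU.isTotallyUnimodular hx0
    hx0int hdint (mem_frontier_of_isLeast hleast)
  have hsum_x0 : ∑ j, x0 j ≤ Jbar.card * xmax :=
    sum_le_card_mul_of_support_subset
      (fun j hj => (hJbar j).2 ((hx0 j).lt_of_ne' (mem_support.1 hj)))
      fun j hj => hxmax.2 ⟨j, (hJbar j).1 hj, rfl⟩
  have hsum_d : ∑ j, |d j| ≤ n * dmax := by
    simpa [abs_of_pos (hd _)] using Finset.univ.sum_le_card_nsmul d dmax fun j _ => hdmax.2 ⟨j, rfl⟩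
  have hxmax_pos : 0 < xmax := by
    obtain ⟨j, hj, rfl⟩ := hxmax.1
    exact hj
  have hdmax_pos : 0 < dmax := by
    obtain ⟨j, rfl⟩ := hdmax.1
    exact hd j
  refine ⟨ς, σ, hσ, hz, ?_, ?_⟩
  · linarith [show 0 ≤ Jbar.card * xmax by positivity]
  · linarith [show 0 ≤ Jbar.card * dmax by positivity]
end

section
/- Let δ = c_{J̄}·x⁰_{J̄} − K and suppose F(z) ≠ ∅ for every z ∈ ℝ. Let ẑ ∈ ℝ and suppose there exist ε > 0 and real numbers k⁻, k⁺ such that ψ(z) = ψ(ẑ) + k⁻·(z − ẑ) for all z ∈ [ẑ − ε, ẑ], ψ(z) = ψ(ẑ) + k⁺·(z − ẑ) for all z ∈ [ẑ, ẑ + ε], and k⁺ ≤ δ ≤ k⁻. If ȳ ∈ F(ẑ) satisfies c·ȳ = ψ(ẑ), then for every z ∈ ℝ and every y ∈ F(z) one has c·y − δ·z ≤ c·ȳ − δ·ẑ; that is, (ȳ, ẑ) is an optimal solution of the problem of maximizing c·y + (K − c_{J̄}·x⁰_{J̄})·z over all pairs (y, z) with y ∈ F(z). -/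
open Matrix BigOperators

/-- `ψ(z) = sup {c·y : y ∈ F(z)}`. -/
noncomputable def psi {m n : ℕ} (A : Matrix (Fin m) (Fin n) ℝ)
    (c d x0 : Fin n → ℝ) (z : ℝ) : ℝ :=
  sSup ((fun y => c ⬝ᵥ y) '' Dfeas A d x0 z)

/-!
The pairs `(y, z)` with `y ∈ F(z)` form a convex set on which the objective `c·y - δ z` is linear,
so a local maximum is a global one. The objective is bounded above by `ψ(z) - δ z`, which has a
local maximum at `ẑ` because `k⁺ ≤ δ ≤ k⁻`, and the bound is attained at `(ȳ, ẑ)`. Hence `(ȳ, ẑ)`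
is a local maximum of the objective.
-/

theorem isLocalMaxOn_of_le_comp {X Y β : Type*} [TopologicalSpace X] [TopologicalSpace Y]
    [Preorder β] {f : X → β} {g : Y → β} {π : X → Y} {s : Set X} {a : X}
    (hg : IsLocalMax g (π a)) (hπ : ContinuousWithinAt π s a)
    (hle : ∀ x ∈ s, f x ≤ g (π x)) (ha : g (π a) ≤ f a) : IsLocalMaxOn f s a := by
  filter_upwards [hπ.eventually hg, self_mem_nhdsWithin] with x hgx hxs
  exact (hle x hxs).trans (hgx.trans ha)

theorem isLocalMax_sub_mul_of_le_slopes {R : Type*} [CommRing R] [LinearOrder R]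
    [IsStrictOrderedRing R] [TopologicalSpace R] [OrderTopology R] {f : R → R}
    {a ε slope slopeLeft slopeRight : R} (hε : 0 < ε)
    (hleft : ∀ z ∈ Set.Icc (a - ε) a, f z ≤ f a + slopeLeft * (z - a))
    (hright : ∀ z ∈ Set.Icc a (a + ε), f z ≤ f a + slopeRight * (z - a))
    (hslopeRight : slopeRight ≤ slope) (hslopeLeft : slope ≤ slopeLeft) :
    IsLocalMax (fun z => f z - slope * z) a := by
  filter_upwards [Icc_mem_nhds (sub_lt_self a hε) (lt_add_of_pos_right a hε)] with z hz
  suffices f z ≤ f a + slope * (z - a) by linarith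
  rcases le_total z a with hza | haz
  · calc f z ≤ f a + slopeLeft * (z - a) := hleft z ⟨hz.1, hza⟩
      _ ≤ f a + slope * (z - a) :=
        add_le_add le_rfl (mul_le_mul_of_nonpos_right hslopeLeft (sub_nonpos.2 hza))
  · calc f z ≤ f a + slopeRight * (z - a) := hright z ⟨haz, hz.2⟩
      _ ≤ f a + slope * (z - a) :=
        add_le_add le_rfl (mul_le_mul_of_nonneg_right hslopeRight (sub_nonneg.2 haz))

theorem concaveOn_dotProduct_sub_mul {R ι : Type*} [CommRing R] [LinearOrder R]
    [IsStrictOrderedRing R] [Fintype ι] {s : Set ((ι → R) × R)} (hs : Convex R s)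
    (c : ι → R) (δ : R) : ConcaveOn R s fun p => c ⬝ᵥ p.1 - δ * p.2 :=
  (dotProductBilin R R c ∘ₗ LinearMap.fst R (ι → R) R -
    δ • LinearMap.snd R (ι → R) R).concaveOn hs

section FeasiblePairs

variable {m n : ℕ} {A : Matrix (Fin m) (Fin n) ℝ} {d x0 : Fin n → ℝ}

theorem Dfeas_subset_Icc (hx0 : ∀ j, 0 ≤ x0 j) (z : ℝ) :
    Dfeas A d x0 z ⊆ Set.Icc (fun j => x0 j * z - d j) (fun j => x0 j * z + d j) := by
  rintro y ⟨-, hzero, hpos⟩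
  suffices ∀ j, x0 j * z - d j ≤ y j ∧ y j ≤ x0 j * z + d j from
    ⟨fun j => (this j).1, fun j => (this j).2⟩
  intro j
  rcases (hx0 j).eq_or_lt with hj | hj
  · obtain ⟨hlower, hupper⟩ := hzero j hj.symm
    rw [← hj]
    constructor <;> linarith
  · exact hpos j hj

theorem dotProduct_le_psi (c : Fin n → ℝ) (hx0 : ∀ j, 0 ≤ x0 j) {z : ℝ} {y : Fin n → ℝ}
    (hy : y ∈ Dfeas A d x0 z) : c ⬝ᵥ y ≤ psi A c d x0 z := by
  have hcont : Continuous fun y : Fin n → ℝ => c ⬝ᵥ y := by fun_prop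
  have hbdd : BddAbove ((fun y => c ⬝ᵥ y) '' Dfeas A d x0 z) :=
    (isCompact_Icc.bddAbove_image hcont.continuousOn).mono
      (Set.image_mono (Dfeas_subset_Icc hx0 z))
  exact le_csSup hbdd (Set.mem_image_of_mem _ hy)

/-- The feasible set of the problem in which `y` and `z` vary together: the pairs `(y, z)` with
`y ∈ F(z)`. -/
def feasiblePairs (A : Matrix (Fin m) (Fin n) ℝ) (d x0 : Fin n → ℝ) : Set ((Fin n → ℝ) × ℝ) :=
  {p | p.1 ∈ Dfeas A d x0 p.2}

variable (A d x0) in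
theorem convex_feasiblePairs : Convex ℝ (feasiblePairs A d x0) := by
  let fstL := LinearMap.fst ℝ (Fin n → ℝ) ℝ
  let sndL := LinearMap.snd ℝ (Fin n → ℝ) ℝ
  have hker : Convex ℝ {p : (Fin n → ℝ) × ℝ | A.mulVec p.1 = 0} :=
    (convex_singleton 0).linear_preimage (A.mulVecLin ∘ₗ fstL)
  have hzero : Convex ℝ
      {p : (Fin n → ℝ) × ℝ | ∀ j, x0 j = 0 → -d j ≤ p.1 j ∧ p.1 j ≤ 0} := by
    simp only [Set.ofPred_forall]
    exact convex_iInter₂ fun j _ =>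
      (convex_Icc (-d j) 0).linear_preimage ((LinearMap.proj j : (Fin n → ℝ) →ₗ[ℝ] ℝ) ∘ₗ fstL)
  have hpos : Convex ℝ {p : (Fin n → ℝ) × ℝ |
      ∀ j, 0 < x0 j → x0 j * p.2 - d j ≤ p.1 j ∧ p.1 j ≤ x0 j * p.2 + d j} := by
    simp only [Set.ofPred_forall]
    refine convex_iInter₂ fun j _ => ?_
    have hslab : {p : (Fin n → ℝ) × ℝ | x0 j * p.2 - d j ≤ p.1 j ∧ p.1 j ≤ x0 j * p.2 + d j} =
        ((LinearMap.proj j : (Fin n → ℝ) →ₗ[ℝ] ℝ) ∘ₗ fstL - x0 j • sndL) ⁻¹'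
          Set.Icc (-d j) (d j) := by
      ext p
      simp [fstL, sndL, add_comm]
    exact hslab ▸ (convex_Icc (-d j) (d j)).linear_preimage _
  exact hker.inter (hzero.inter hpos)

theorem critical_value_interior_general {c : Fin n → ℝ} (hx0 : ∀ j, 0 ≤ x0 j) {δ zhat : ℝ}
    (hmax : IsLocalMax (fun z => psi A c d x0 z - δ * z) zhat)
    {ybar : Fin n → ℝ} (hybar : ybar ∈ Dfeas A d x0 zhat)
    (hybaropt : c ⬝ᵥ ybar = psi A c d x0 zhat) :
    ∀ z : ℝ, ∀ y ∈ Dfeas A d x0 z, c ⬝ᵥ y - δ * z ≤ c ⬝ᵥ ybar - δ * zhat := by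
  have hlocal : IsLocalMaxOn (fun p => c ⬝ᵥ p.1 - δ * p.2) (feasiblePairs A d x0)
      (ybar, zhat) :=
    isLocalMaxOn_of_le_comp (π := Prod.snd) hmax continuousWithinAt_snd
      (fun _ hp => sub_le_sub_right (dotProduct_le_psi c hx0 hp) _)
      (sub_le_sub_right hybaropt.ge _)
  have hglobal : IsMaxOn (fun p => c ⬝ᵥ p.1 - δ * p.2) (feasiblePairs A d x0) (ybar, zhat) :=
    .of_isLocalMaxOn_of_concaveOn hybar hlocal
      (concaveOn_dotProduct_sub_mul (convex_feasiblePairs A d x0) c δ)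
  exact fun z y hy => hglobal (a := (y, z)) hy

end FeasiblePairs

/-- if `ψ` is linear with slope `k⁻` on `[ẑ−ε, ẑ]` and slope `k⁺` on
`[ẑ, ẑ+ε]` with `k⁺ ≤ δ ≤ k⁻`, and `ȳ` attains `ψ(ẑ)`, then `(ȳ, ẑ)` maximizes
`c·y − δ·z` over all pairs `(y, z)` with `y ∈ F(z)`. -/
theorem critical_value_interior {m n : ℕ} (A : Matrix (Fin m) (Fin n) ℝ)
    (c d x0 : Fin n → ℝ) (hd : ∀ j, 0 < d j) (hx0 : ∀ j, 0 ≤ x0 j) (K : ℝ)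
    (δ : ℝ) (hδ : δ = (∑ j, if 0 < x0 j then c j * x0 j else 0) - K)
    (hall : ∀ z : ℝ, (Dfeas A d x0 z).Nonempty)
    (zhat ε : ℝ) (hε : 0 < ε) (km kp : ℝ)
    (hkm : ∀ z ∈ Set.Icc (zhat - ε) zhat,
      psi A c d x0 z = psi A c d x0 zhat + km * (z - zhat))
    (hkp : ∀ z ∈ Set.Icc zhat (zhat + ε),
      psi A c d x0 z = psi A c d x0 zhat + kp * (z - zhat))
    (hkpδ : kp ≤ δ) (hδkm : δ ≤ km)
    (ybar : Fin n → ℝ) (hybar : ybar ∈ Dfeas A d x0 zhat)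
    (hybaropt : c ⬝ᵥ ybar = psi A c d x0 zhat) :
    ∀ z : ℝ, ∀ y ∈ Dfeas A d x0 z, c ⬝ᵥ y - δ * z ≤ c ⬝ᵥ ybar - δ * zhat :=
  critical_value_interior_general hx0 (isLocalMax_sub_mul_of_le_slopes hε
    (fun z hz => (hkm z hz).le) (fun z hz => (hkp z hz).le) hkpδ hδkm) hybar hybaropt
end
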